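/- Assume that for all x ∈ 𝒜 and i ∈ {1,…,n}, d_{xi} > 0 implies φ_{ix} > 0, and that for every x ∈ 𝒜 there exists at least one i with φ_{ix} > 0. Let ε = max_{x∈𝒜} max_{ i,j : φ_{ix}>0, φ_{jx}>0 } |J*(i) − J*(j)|, and define the vector r̄ ∈ ℝ^𝒜 by r̄_x = min_{ i : φ_{ix}>0 } J*(i) + ε/(1−α). Then (H r̄)(x) ≤ r̄_x for every x ∈ 𝒜. -/

import Mathlib

/-!
Write `T` for the Bellman operator, so that `H r` averages `T (Φ r)` against the disaggregation
probabilities, where `Φ r` interpolates `r` by the aggregation probabilities. Put `K = ε / (1 - α)`,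
the solution of `K = ε + α K`, and `r̄ = (footprint minimum of J) + K`. A state belongs to every
footprint over which its interpolation runs, hence `Φ r̄ ≤ J + K`; as `T` is monotone and turns the
shift `K` into `α K`, this gives `T (Φ r̄) ≤ T J + α K ≤ J + α K`. On the footprint of `x`, `J`
exceeds its minimum by at most `ε`, so `J + α K ≤ r̄ x` there, and averaging preserves the bound.
-/

theorem sum_mul_le_of_forall_pos_le {ι 𝕜 : Type*} [Fintype ι] [Field 𝕜] [LinearOrder 𝕜]
    [IsStrictOrderedRing 𝕜] {w f : ι → 𝕜} {c : 𝕜} (hw : ∀ i, 0 ≤ w i) (hw1 : ∑ i, w i = 1)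
    (hf : ∀ i, 0 < w i → f i ≤ c) : ∑ i, w i * f i ≤ c := by
  have average_mem : ∑ᶠ i, w i • f i ∈ Set.Iic c :=
    (convex_Iic c).finsum_mem hw (by rwa [finsum_eq_sum_of_fintype])
      fun i hi => hf i ((hw i).lt_of_ne' hi)
  rwa [finsum_eq_sum_of_fintype] at average_mem

theorem add_mul_div_one_sub {𝕜 : Type*} [Field 𝕜] {α : 𝕜} (hα : α ≠ 1) (ε : 𝕜) :
    ε + α * (ε / (1 - α)) = ε / (1 - α) := by
  have : 1 - α ≠ 0 := sub_ne_zero.2 hα.symm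
  field_simp
  ring

section Bellman

variable {S C : Type*} [Fintype S] (U : S → Finset C) (hU : ∀ i, (U i).Nonempty)
  (p g : S → C → S → ℝ) (α : ℝ)

/-- The Bellman operator `T` of the discounted problem with control sets `U`, transition
probabilities `p`, stage costs `g` and discount factor `α`. -/
noncomputable def bellmanOperator (J : S → ℝ) (i : S) : ℝ :=
  (U i).inf' (hU i) fun u => ∑ j, p i u j * (g i u j + α * J j)

variable {U p α}

theorem bellmanOperator_mono (hp : ∀ i, ∀ u ∈ U i, ∀ j, 0 ≤ p i u j) (hα : 0 ≤ α) :
    Monotone (bellmanOperator U hU p g α) := fun _ _ hJ i =>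
  Finset.inf'_mono_fun fun u hu => Finset.sum_le_sum fun j _ =>
    mul_le_mul_of_nonneg_left (by gcongr; exact hJ j) (hp i u hu j)

theorem bellmanOperator_add_const (hp1 : ∀ i, ∀ u ∈ U i, ∑ j, p i u j = 1) (J : S → ℝ) (K : ℝ)
    (i : S) :
    bellmanOperator U hU p g α (fun j => J j + K) i
      = bellmanOperator U hU p g α J i + α * K := by
  have shifted_cost : ∀ u ∈ U i, ∑ j, p i u j * (g i u j + α * (J j + K))
      = ∑ j, p i u j * (g i u j + α * J j) + α * K := fun u hu =>
    calc ∑ j, p i u j * (g i u j + α * (J j + K))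
        = ∑ j, (p i u j * (g i u j + α * J j) + p i u j * (α * K)) :=
          Finset.sum_congr rfl fun j _ => by ring
      _ = ∑ j, p i u j * (g i u j + α * J j) + α * K := by
          rw [Finset.sum_add_distrib, ← Finset.sum_mul, hp1 i u hu, one_mul]
  calc bellmanOperator U hU p g α (fun j => J j + K) i
      = (U i).inf' (hU i) fun u => ∑ j, p i u j * (g i u j + α * J j) + α * K :=
        Finset.inf'_congr _ rfl shifted_cost
    _ = bellmanOperator U hU p g α J i + α * K :=
        (map_finset_inf' (OrderIso.addRight (α * K)) (hU i) _).symm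

end Bellman

section Aggregation

variable {S C A : Type*} [Fintype S]

/-- The footprint of the aggregate state `x`: the states with positive aggregation probability
into `x`. -/
noncomputable def footprint (φ : S → A → ℝ) (x : A) : Finset S :=
  Finset.univ.filter fun i => 0 < φ i x

theorem mem_footprint {φ : S → A → ℝ} {x : A} {i : S} : i ∈ footprint φ x ↔ 0 < φ i x := by
  simp [footprint]

variable [Fintype A]

/-- The largest variation of `J` over a footprint. Pairs of states that do not share the footprint
contribute `0`, which leaves the maximum unchanged because variations are nonnegative. -/
noncomputable def footprintOscillation [Nonempty S] [Nonempty A] (φ : S → A → ℝ) (J : S → ℝ) : ℝ :=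
  Finset.univ.sup' Finset.univ_nonempty fun q : A × S × S =>
    if 0 < φ q.2.1 q.1 ∧ 0 < φ q.2.2 q.1 then |J q.2.1 - J q.2.2| else 0

theorem sub_le_footprintOscillation [Nonempty S] [Nonempty A] {φ : S → A → ℝ} (J : S → ℝ) {x : A}
    {i j : S} (hi : i ∈ footprint φ x) (hj : j ∈ footprint φ x) :
    J i - J j ≤ footprintOscillation φ J :=
  calc J i - J j ≤ |J i - J j| := le_abs_self _
    _ = if 0 < φ i x ∧ 0 < φ j x then |J i - J j| else 0 :=
        (if_pos ⟨mem_footprint.1 hi, mem_footprint.1 hj⟩).symm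
    _ ≤ footprintOscillation φ J :=
        Finset.le_sup' (fun q : A × S × S =>
          if 0 < φ q.2.1 q.1 ∧ 0 < φ q.2.2 q.1 then |J q.2.1 - J q.2.2| else 0)
          (Finset.mem_univ (x, i, j))

/-- The aggregation operator `H`: interpolate a vector on aggregate states by the aggregation
probabilities `φ`, apply the Bellman operator, and average by the disaggregation probabilities
`d`. -/
noncomputable def aggregateBellmanOperator (U : S → Finset C) (hU : ∀ i, (U i).Nonempty)
    (p g : S → C → S → ℝ) (α : ℝ) (d : A → S → ℝ) (φ : S → A → ℝ) (r : A → ℝ) (x : A) : ℝ :=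
  ∑ i, d x i * bellmanOperator U hU p g α (fun j => ∑ y, φ j y * r y) i

theorem aggregation_upper_vector_is_superharmonic_general
    {U : S → Finset C} (hU : ∀ i, (U i).Nonempty) {α : ℝ} (hα0 : 0 ≤ α) (hα1 : α < 1)
    {p : S → C → S → ℝ} (g : S → C → S → ℝ)
    (hp : ∀ i, ∀ u ∈ U i, ∀ j, 0 ≤ p i u j) (hp1 : ∀ i, ∀ u ∈ U i, ∑ j, p i u j = 1)
    {d : A → S → ℝ} (hd : ∀ x i, 0 ≤ d x i) (hd1 : ∀ x, ∑ i, d x i = 1)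
    {φ : S → A → ℝ} (hφ : ∀ j y, 0 ≤ φ j y) (hφ1 : ∀ j, ∑ y, φ j y = 1)
    {J : S → ℝ} (hJ : bellmanOperator U hU p g α J ≤ J)
    (hcond : ∀ x i, 0 < d x i → i ∈ footprint φ x) (hsupp : ∀ x, (footprint φ x).Nonempty)
    {ε : ℝ} (hε : ∀ x, ∀ i ∈ footprint φ x, ∀ j ∈ footprint φ x, J i - J j ≤ ε) :
    let rbar : A → ℝ := fun x => (footprint φ x).inf' (hsupp x) J + ε / (1 - α)
    aggregateBellmanOperator U hU p g α d φ rbar ≤ rbar := by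
  intro rbar x
  set K := ε / (1 - α)
  have interpolation_le : (fun j => ∑ y, φ j y * rbar y) ≤ fun j => J j + K := fun j =>
    sum_mul_le_of_forall_pos_le (hφ j) (hφ1 j) fun y hy =>
      add_le_add_left (Finset.inf'_le J (mem_footprint.2 hy)) K
  have le_rbar : ∀ i ∈ footprint φ x, J i + α * K ≤ rbar x := fun i hi => by
    have : J i - ε ≤ (footprint φ x).inf' (hsupp x) J :=
      Finset.le_inf' _ _ fun j hj => sub_le_comm.1 (hε x i hi j hj)
    calc J i + α * K = J i - ε + (ε + α * K) := by ring
      _ = J i - ε + K := by rw [add_mul_div_one_sub hα1.ne]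
      _ ≤ rbar x := add_le_add_left this K
  refine sum_mul_le_of_forall_pos_le (hd x) (hd1 x) fun i hi => ?_
  calc bellmanOperator U hU p g α (fun j => ∑ y, φ j y * rbar y) i
      ≤ bellmanOperator U hU p g α (fun j => J j + K) i :=
        bellmanOperator_mono hU g hp hα0 interpolation_le i
    _ = bellmanOperator U hU p g α J i + α * K := bellmanOperator_add_const hU g hp1 J K i
    _ ≤ J i + α * K := add_le_add_left (hJ i) _
    _ ≤ rbar x := le_rbar i (hcond x i hi)

end Aggregation

/-- If `d_{xi} > 0 ⟹ φ_{ix} > 0` and each aggregate state has nonempty footprint,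
then the vector `r̄` with `r̄_x = min_{i : φ_{ix}>0} J*(i) + ε/(1−α)` satisfies
`(H r̄)(x) ≤ r̄_x` for every aggregate state `x`. -/
theorem aggregation_upper_vector_is_superharmonic
    (n : ℕ) [NeZero n] (C A : Type) [Fintype A] [Nonempty A]
    (U : Fin n → Finset C) (hU : ∀ i, (U i).Nonempty)
    (α : ℝ) (hα0 : 0 < α) (hα1 : α < 1)
    (p g : Fin n → C → Fin n → ℝ)
    (hp : ∀ i, ∀ u ∈ U i, ∀ j, 0 ≤ p i u j)
    (hp1 : ∀ i, ∀ u ∈ U i, ∑ j, p i u j = 1)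
    (d : A → Fin n → ℝ) (hd : ∀ x i, 0 ≤ d x i) (hd1 : ∀ x, ∑ i, d x i = 1)
    (φ : Fin n → A → ℝ) (hφ : ∀ j y, 0 ≤ φ j y) (hφ1 : ∀ j, ∑ y, φ j y = 1)
    -- `J*` is the optimal cost vector of the original problem
    (Jstar : Fin n → ℝ)
    (hJstar : ∀ i, Jstar i = (U i).inf' (hU i)
      (fun u => ∑ j, p i u j * (g i u j + α * Jstar j)))
    -- the aggregation operator `H`
    (H : (A → ℝ) → A → ℝ)
    (hH : ∀ r x, H r x = ∑ i, d x i * (U i).inf' (hU i)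
      (fun u => ∑ j, p i u j * (g i u j + α * ∑ y, φ j y * r y)))
    -- the support condition
    (hcond : ∀ x i, 0 < d x i → 0 < φ i x)
    -- every aggregate state has at least one state in its footprint
    (hsupp : ∀ x : A, ∃ i, 0 < φ i x)
    -- `ε = max_{x∈𝒜} max_{i,j : φ_{ix}>0, φ_{jx}>0} |J*(i) − J*(j)|`
    (ε : ℝ)
    (hε : ε = Finset.univ.sup' Finset.univ_nonempty
      (fun q : A × Fin n × Fin n =>
        if 0 < φ q.2.1 q.1 ∧ 0 < φ q.2.2 q.1 then |Jstar q.2.1 - Jstar q.2.2| else 0))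
    -- `r̄_x = min_{i : φ_{ix}>0} J*(i) + ε/(1−α)`
    (rbar : A → ℝ)
    (hrbar : ∀ x, rbar x =
      (Finset.univ.filter fun i => 0 < φ i x).inf'
        (by obtain ⟨i, hi⟩ := hsupp x
            exact ⟨i, Finset.mem_filter.2 ⟨Finset.mem_univ i, hi⟩⟩) Jstar
      + ε / (1 - α)) :
    ∀ x, H rbar x ≤ rbar x := by
  obtain rfl : rbar = _ := funext hrbar
  exact fun x => (hH _ x).trans_le <| aggregation_upper_vector_is_superharmonic_general hU hα0.le
    hα1 g hp hp1 hd hd1 hφ hφ1 (fun i => (hJstar i).ge)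
    (fun y i hi => mem_footprint.2 (hcond y i hi)) (fun y => (hsupp y).imp fun _ => mem_footprint.2)
    (fun _ _ hi _ hj => (sub_le_footprintOscillation Jstar hi hj).trans_eq hε.symm) x
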